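/- arXiv:2206.02078 — 4 statements merged into one kernel-verified Lean document; each statement's English description precedes it below -/
import Mathlib

section
/- (Number of rounds per stage of SRPFL.) Let 0 < a ≤ 1/4 and set s := √(1−a). Let C ≥ 0 and 0 ≤ T_{r−1} < T_r < T_{r+1} be real numbers with T_{r−1} + C > 0, and define X_r := (a/(√(2^{r−1}·(1−a))·(1−s))) · (1 + (T_{r−1} + C)·(1 − 1/√2)/(T_r − T_{r−1})) and X_{r+1} := (a/(√(2^r·(1−a))·(1−s))) · (1 + (T_r + C)·(1 − 1/√2)/(T_{r+1} − T_r)), where r ≥ 1 is an integer. If t is a nonnegative integer with s^t ≤ (T_r − T_{r−1})/(√2·(T_{r+1} − T_r)), then X_r·s^t + (a/√(2^r·(1−a)))·(1 − s^t)/(1 − s) ≤ X_{r+1}. -/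
open Real

/-- number of rounds per stage of SRPFL.  If
`s^t ≤ (T_r − T_{r−1})/(√2 (T_{r+1} − T_r))` then `t` contraction steps started
from the doubling point `X_r` reach the next doubling point `X_{r+1}`. -/
theorem srpfl_rounds_per_stage
    (a : ℝ) (ha0 : 0 < a) (ha : a ≤ 1 / 4)
    (s : ℝ) (hs : s = Real.sqrt (1 - a))
    (C Trm1 Tr Tr1 : ℝ) (hC : 0 ≤ C) (hTrm1 : 0 ≤ Trm1)
    (h1 : Trm1 < Tr) (h2 : Tr < Tr1) (hpos : 0 < Trm1 + C)
    (r : ℕ) (hr : 1 ≤ r)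
    (Xr Xr1 : ℝ)
    (hXr : Xr = a / (Real.sqrt (2 ^ (r - 1) * (1 - a)) * (1 - s)) *
      (1 + (Trm1 + C) * (1 - 1 / Real.sqrt 2) / (Tr - Trm1)))
    (hXr1 : Xr1 = a / (Real.sqrt (2 ^ r * (1 - a)) * (1 - s)) *
      (1 + (Tr + C) * (1 - 1 / Real.sqrt 2) / (Tr1 - Tr)))
    (t : ℕ) (ht : s ^ t ≤ (Tr - Trm1) / (Real.sqrt 2 * (Tr1 - Tr))) :
    Xr * s ^ t + a / Real.sqrt (2 ^ r * (1 - a)) * (1 - s ^ t) / (1 - s) ≤ Xr1 := by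
  have hs1 : s < 1 := by
    rw [hs, Real.sqrt_lt' one_pos]; linarith
  have h1s : 0 < 1 - s := by linarith
  have hw : 0 < Real.sqrt 2 := by positivity
  have hw1 : 1 < Real.sqrt 2 := by
    rw [Real.lt_sqrt zero_le_one]; norm_num
  have hsq : Real.sqrt (2 ^ r * (1 - a)) = Real.sqrt 2 * Real.sqrt (2 ^ (r - 1) * (1 - a)) := by
    rw [← Real.sqrt_mul (by norm_num), ← mul_assoc, ← pow_succ', Nat.sub_add_cancel hr]
  have hP : 0 < Real.sqrt (2 ^ (r - 1) * (1 - a)) := by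
    have : 0 < 1 - a := by linarith
    positivity
  rw [hsq] at hXr1 ⊢
  generalize Real.sqrt (2 ^ (r - 1) * (1 - a)) = P at *
  generalize Real.sqrt 2 = w at *
  generalize s ^ t = q at *
  have hd1 : 0 < Tr - Trm1 := by linarith
  have hd2 : 0 < Tr1 - Tr := by linarith
  have hk : 0 < 1 - 1 / w := by
    have : 1 / w < 1 := by rw [div_lt_one hw]; exact hw1
    linarith
  have hq : 0 ≤ (Tr - Trm1) / (w * (Tr1 - Tr)) - q := by linarith
  have key : Xr1 - (Xr * q + a / (w * P) * (1 - q) / (1 - s)) =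
      a / (P * (1 - s)) * ((1 - 1 / w) * ((Trm1 + C) / (Tr - Trm1) + 1) *
        ((Tr - Trm1) / (w * (Tr1 - Tr)) - q)) := by
    rw [hXr, hXr1]
    have e : Tr + C = (Trm1 + C) + (Tr - Trm1) := by ring
    rw [e]
    generalize Tr - Trm1 = d at *
    generalize Tr1 - Tr = d' at *
    generalize 1 - s = z at *
    field_simp
    ring
  have : 0 ≤ Xr1 - (Xr * q + a / (w * P) * (1 - q) / (1 - s)) := by
    rw [key]; positivity
  linarith
end

section
/- For every integer K ≥ 2, writing N := 2^K and H_j := Σ_{i=1}^{j} 1/i (with H_0 := 0), one has Σ_{j=2}^{K} (H_N − H_{N − N/2^j}) ≤ 1. -/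
open Finset

theorem aux_tail (H : ℕ → ℝ) (hH : ∀ j, H j = ∑ i ∈ Finset.Icc 1 j, (1 : ℝ) / i)
    (m n : ℕ) (hm : 0 < m) : H (m + n) - H m ≤ n * (1 / (m : ℝ)) := by
  induction n with
  | zero => simp
  | succ k ih =>
    have h1 : H (m + (k + 1)) = H (m + k) + 1 / ((m + k + 1 : ℕ) : ℝ) := by
      rw [hH, hH, ← add_assoc, Finset.sum_Icc_succ_top (by omega)]
    have h2 : 1 / ((m + k + 1 : ℕ) : ℝ) ≤ 1 / (m : ℝ) := by
      apply one_div_le_one_div_of_le (by exact_mod_cast hm)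
      exact_mod_cast (by omega)
    push_cast at *
    linarith

theorem aux_geom (K : ℕ) (hK : 1 ≤ K) :
    ∑ j ∈ Finset.Icc 2 K, (2 : ℝ) / 2 ^ j = 1 - 2 / 2 ^ K := by
  induction K, hK using Nat.le_induction with
  | base => simp
  | succ k hk ih =>
    rw [Finset.sum_Icc_succ_top (by omega), ih, pow_succ]
    field_simp
    ring

/-- for `N = 2^K`, the sum of the tail harmonic differences over the
dyadic early stages is at most 1. -/
theorem dyadic_harmonic_tail_sum_le_one
    (K : ℕ) (hK : 2 ≤ K) (N : ℕ) (hN : N = 2 ^ K)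
    (H : ℕ → ℝ) (hH : ∀ j, H j = ∑ i ∈ Finset.Icc 1 j, (1 : ℝ) / i) :
    ∑ j ∈ Finset.Icc 2 K, (H N - H (N - N / 2 ^ j)) ≤ 1 := by
  have key : ∀ j ∈ Finset.Icc 2 K, H N - H (N - N / 2 ^ j) ≤ (2 : ℝ) / 2 ^ j := by
    intro j hj
    rw [Finset.mem_Icc] at hj
    have hn : 0 < 2 ^ (K - j) := by positivity
    have hNn : N = 2 ^ (K - j) * 2 ^ j := by
      rw [hN, ← pow_add]; congr 1; omega
    have hdiv : N / 2 ^ j = 2 ^ (K - j) := by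
      rw [hNn]; exact Nat.mul_div_cancel _ (by positivity)
    have h4 : 2 ^ 2 ≤ 2 ^ j := Nat.pow_le_pow_right (by norm_num) hj.1
    rw [hdiv]
    generalize 2 ^ (K - j) = n at *
    have hle : 2 * n ≤ N := by rw [hNn]; nlinarith
    have h := aux_tail H hH (N - n) n (by omega)
    rw [Nat.sub_add_cancel (by omega)] at h
    refine h.trans ?_
    have hNpos : (0 : ℝ) < N := by exact_mod_cast (by omega : 0 < N)
    have hnpos : (0 : ℝ) < n := by exact_mod_cast hn
    have hle' : (2 : ℝ) * n ≤ N := by exact_mod_cast hle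
    have hNR : (N : ℝ) = n * 2 ^ j := by exact_mod_cast hNn
    rw [Nat.cast_sub (by omega), mul_one_div, div_le_div_iff₀ (by linarith) (by positivity)]
    linarith
  have h := Finset.sum_le_sum key
  rw [aux_geom K (by omega)] at h
  have : (0 : ℝ) < 2 / 2 ^ K := by positivity
  linarith
end

section
/- (Wall-clock time of SRPFL; upper bound.) There exists an absolute constant C₀ > 0 with the following property. Let λ > 0, c ≥ 0, a ∈ (0, 1/4], ĉ ∈ (1, √2), let n₀ ≥ 1 and K ≥ 2 be integers, and set N := 2^K·n₀. For 1 ≤ n ≤ N let E_n := (1/λ)·Σ_{i=N−n+1}^{N} 1/i, let C := c/λ, and for 1 ≤ i ≤ K−1 let t^i := 2·log(√2·(E_{n₀·2^{i+1}} − E_{n₀·2^i})/(E_{n₀·2^i} − E_{n₀·2^{i−1}}))/log(1/(1−a)). Define T_SRPFL := Σ_{i=1}^{K−1} t^i·(E_{n₀·2^i} + C) + (E_N + C)·(2·log(1/(ĉ−1))/log(1/(1−a)) + 1). Then T_SRPFL ≤ C₀·(c+1)·log(N)·log(1/(ĉ−1))/(λ·log(1/(1−a))). -/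
open Real Finset


noncomputable def hh (k : ℕ) : ℝ := ∑ i ∈ Finset.range k, (1 : ℝ) / ((i : ℝ) + 1)

lemma hh_succ (k : ℕ) : hh (k + 1) = hh k + 1 / ((k : ℝ) + 1) := by
  simp [hh, Finset.sum_range_succ]

lemma hh_zero : hh 0 = 0 := by simp [hh]

lemma hh_Icc (p d : ℕ) : ∑ i ∈ Finset.Icc (p + 1) (p + d), (1 : ℝ) / i = hh (p + d) - hh p := by
  induction d with
  | zero => simp
  | succ d ih =>
    rw [← add_assoc, Finset.sum_Icc_succ_top (by omega), ih, hh_succ]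
    push_cast
    ring

lemma hh_upper (p d : ℕ) (hp : 0 < p) : hh (p + d) - hh p ≤ d / p := by
  have hp' : (0 : ℝ) < p := by exact_mod_cast hp
  induction d with
  | zero => simp
  | succ d ih =>
    rw [← add_assoc, hh_succ]
    have : (1 : ℝ) / (((p + d : ℕ) : ℝ) + 1) ≤ 1 / p := by
      apply one_div_le_one_div_of_le hp'
      push_cast
      have : (0 : ℝ) ≤ d := Nat.cast_nonneg d
      linarith
    push_cast at *
    rw [add_div]
    linarith

lemma hh_lower (p d q : ℕ) (hq : p + d ≤ q) : (d : ℝ) / q ≤ hh (p + d) - hh p := by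
  induction d with
  | zero => simp
  | succ d ih =>
    rw [← add_assoc, hh_succ]
    have ih := ih (by omega)
    have : (1 : ℝ) / q ≤ 1 / (((p + d : ℕ) : ℝ) + 1) := by
      apply one_div_le_one_div_of_le (by positivity)
      exact_mod_cast hq
    push_cast at *
    rw [add_div]
    linarith

lemma hh_log (k : ℕ) : hh k ≤ 1 + Real.log k := by
  have := harmonic_le_one_add_log k
  rw [harmonic] at this
  push_cast at this
  simpa [hh] using this

/-- the ratio bound -/
lemma ratio_bound (N u : ℕ) (hu : 1 ≤ u) (X : ℝ) (hX : 0 ≤ X)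
    (h : 8 * u ≤ N ∨ (4 * u = N ∧ X = Real.log N)) :
    Real.log (Real.sqrt 2 * (hh (N - 2 * u) - hh (N - 4 * u)) /
      (hh (N - u) - hh (N - 2 * u))) ≤ 5 + X := by
  have hN : 4 * u ≤ N := by omega
  have hu' : (0 : ℝ) < u := by exact_mod_cast hu
  have hN' : (0 : ℝ) < N := by exact_mod_cast (by omega : 0 < N)
  have hD : (u : ℝ) / N ≤ hh (N - u) - hh (N - 2 * u) := by
    have := hh_lower (N - 2 * u) u N (by omega)
    rwa [show N - 2 * u + u = N - u by omega] at this
  have hA0 : ((2 * u : ℕ) : ℝ) / N ≤ hh (N - 2 * u) - hh (N - 4 * u) := by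
    have := hh_lower (N - 4 * u) (2 * u) N (by omega)
    rwa [show N - 4 * u + 2 * u = N - 2 * u by omega] at this
  have hA : hh (N - 2 * u) - hh (N - 4 * u) ≤ 4 * (1 + X) * (u / N) := by
    rcases h with h | ⟨h, hx⟩
    · have h1 := hh_upper (N - 4 * u) (2 * u) (by omega)
      rw [show N - 4 * u + 2 * u = N - 2 * u by omega] at h1
      refine h1.trans ?_
      have h2 : (N : ℝ) / 2 ≤ ((N - 4 * u : ℕ) : ℝ) := by
        rw [Nat.cast_sub hN]
        push_cast
        have : (8 : ℝ) * u ≤ N := by exact_mod_cast h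
        linarith
      have h3 : ((2 * u : ℕ) : ℝ) / ((N - 4 * u : ℕ) : ℝ) ≤ ((2 * u : ℕ) : ℝ) / ((N : ℝ) / 2) :=
        div_le_div_of_nonneg_left (by positivity) (by positivity) h2
      refine h3.trans ?_
      have : ((2 * u : ℕ) : ℝ) / ((N : ℝ) / 2) = 4 * (u / N) := by
        push_cast
        field_simp
        norm_num
      rw [this]
      have : (0 : ℝ) < u / N := by positivity
      nlinarith
    · have h1 : (u : ℝ) / N = 1 / 4 := by
        rw [← h]
        push_cast
        field_simp
      rw [h1, show N - 4 * u = 0 by omega, hh_zero, hx]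
      have h2 := hh_log (N - 2 * u)
      have h3 : Real.log ((N - 2 * u : ℕ) : ℝ) ≤ Real.log N := by
        apply Real.log_le_log
        · exact_mod_cast (by omega : 0 < N - 2 * u)
        · exact_mod_cast Nat.sub_le _ _
      linarith
  have hq : (0 : ℝ) < u / N := by positivity
  have hD0 : 0 < hh (N - u) - hh (N - 2 * u) := lt_of_lt_of_le hq hD
  have hA1 : 0 < hh (N - 2 * u) - hh (N - 4 * u) := lt_of_lt_of_le (by positivity) hA0
  have hs : Real.sqrt 2 ≤ 3 / 2 := by
    rw [Real.sqrt_le_left (by norm_num)]; norm_num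
  have hs0 : 0 < Real.sqrt 2 := by positivity
  have hle : Real.sqrt 2 * (hh (N - 2 * u) - hh (N - 4 * u)) /
      (hh (N - u) - hh (N - 2 * u)) ≤ 6 * (1 + X) := by
    rw [div_le_iff₀ hD0]
    calc _ ≤ (3 / 2) * (4 * (1 + X) * (u / N)) := by gcongr
      _ = 6 * (1 + X) * (u / N) := by ring
      _ ≤ _ := by gcongr
  have h6 := Real.log_le_sub_one_of_pos (show (0 : ℝ) < 6 by norm_num)
  have h1X := Real.log_le_sub_one_of_pos (show (0 : ℝ) < 1 + X by linarith)
  have := Real.log_le_log (by positivity) hle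
  rw [Real.log_mul (by norm_num) (by positivity)] at this
  linarith

/-- upper bound on the expected wall-clock time of SRPFL. -/
theorem srpfl_wall_clock_upper_bound :
    ∃ C₀ : ℝ, 0 < C₀ ∧
      ∀ (lam c a chat : ℝ) (n₀ K N : ℕ),
        0 < lam → 0 ≤ c → 0 < a → a ≤ 1 / 4 → 1 < chat → chat < Real.sqrt 2 →
        1 ≤ n₀ → 2 ≤ K → N = 2 ^ K * n₀ →
        ∀ E : ℕ → ℝ,
          (∀ n, 1 ≤ n → n ≤ N →
            E n = (1 / lam) * ∑ i ∈ Finset.Icc (N - n + 1) N, (1 : ℝ) / i) →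
        ∀ C : ℝ, C = c / lam →
        ∀ t : ℕ → ℝ,
          (∀ i, 1 ≤ i → i ≤ K - 1 →
            t i = 2 * Real.log (Real.sqrt 2 * (E (n₀ * 2 ^ (i + 1)) - E (n₀ * 2 ^ i)) /
                (E (n₀ * 2 ^ i) - E (n₀ * 2 ^ (i - 1)))) / Real.log (1 / (1 - a))) →
        ∀ T : ℝ,
          T = (∑ i ∈ Finset.Icc 1 (K - 1), t i * (E (n₀ * 2 ^ i) + C)) +
              (E N + C) * (2 * Real.log (1 / (chat - 1)) / Real.log (1 / (1 - a)) + 1) →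
        T ≤ C₀ * (c + 1) * Real.log N * Real.log (1 / (chat - 1)) /
              (lam * Real.log (1 / (1 - a))) := by
  refine ⟨52, by norm_num, ?_⟩
  intro lam c a chat n₀ K N hlam hc ha ha4 hch hch2 hn hK hN E hE C hC t ht T hT
  have hEh : ∀ n, 1 ≤ n → n ≤ N → E n = (1 / lam) * (hh N - hh (N - n)) := by
    intro n h1 h2
    rw [hE n h1 h2]
    have := hh_Icc (N - n) n
    rw [show N - n + n = N by omega] at this
    rw [this]
  have hN4 : 2 ^ 2 ≤ N := by
    rw [hN]
    calc 2 ^ 2 ≤ 2 ^ K := Nat.pow_le_pow_right (by norm_num) hK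
      _ ≤ 2 ^ K * n₀ := Nat.le_mul_of_pos_right _ hn
  have hl2 := Real.log_two_gt_d9
  have hKN : K * Real.log 2 ≤ Real.log N := by
    rw [← Real.log_pow]
    apply Real.log_le_log (by positivity)
    rw [hN]
    exact_mod_cast Nat.le_mul_of_pos_right _ hn
  have hK' : (2 : ℝ) ≤ K := by exact_mod_cast hK
  have hlogN : 1 ≤ Real.log N := by nlinarith
  have hKl : (K : ℝ) ≤ 2 * Real.log N := by nlinarith
  set G := Real.log N with hG
  set ell := Real.log (1 / (1 - a)) with hell
  have hell0 : 0 < ell := by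
    apply Real.log_pos
    rw [lt_div_iff₀ (by linarith)]
    linarith
  have hell1 : ell ≤ 1 := by
    have h1 : (1 : ℝ) / (1 - a) ≤ 2 := by
      rw [div_le_iff₀ (by linarith)]
      linarith
    have := Real.log_le_sub_one_of_pos (show 0 < 1 / (1 - a) from one_div_pos.mpr (by linarith))
    linarith
  set L := Real.log (1 / (chat - 1)) with hL
  have hs : Real.sqrt 2 ≤ 3 / 2 := by
    rw [Real.sqrt_le_left (by norm_num)]; norm_num
  have hLh : 1 / 2 ≤ L := by
    have : (2 : ℝ) ≤ 1 / (chat - 1) := by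
      rw [le_div_iff₀ (by linarith)]
      linarith
    have := Real.log_le_log (by norm_num) this
    linarith
  have hterm : ∀ i ∈ Finset.Icc 1 (K - 1), t i * (E (n₀ * 2 ^ i) + C) ≤
      (2 * (5 + if i = K - 1 then G else 0) / ell) * ((1 + c) / lam) := by
    intro i hi
    rw [Finset.mem_Icc] at hi
    obtain ⟨j, rfl⟩ : ∃ j, i = j + 1 := ⟨i - 1, by omega⟩
    have hu1 : 1 ≤ n₀ * 2 ^ j := Nat.mul_pos hn (by positivity)
    have e2 : n₀ * 2 ^ (j + 1) = 2 * (n₀ * 2 ^ j) := by ring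
    have e4 : n₀ * 2 ^ (j + 1 + 1) = 4 * (n₀ * 2 ^ j) := by ring
    have hcase : 8 * (n₀ * 2 ^ j) ≤ N ∧ j + 1 ≠ K - 1 ∨ 4 * (n₀ * 2 ^ j) = N ∧ j + 1 = K - 1 := by
      by_cases hj : j + 1 = K - 1
      · right
        refine ⟨?_, hj⟩
        rw [hN, show K = j + 2 by omega]
        ring
      · left
        refine ⟨?_, hj⟩
        calc 8 * (n₀ * 2 ^ j) = 2 ^ (j + 3) * n₀ := by ring
          _ ≤ 2 ^ K * n₀ := Nat.mul_le_mul_right _ (Nat.pow_le_pow_right (by norm_num) (by omega))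
          _ = N := hN.symm
    have htj := ht (j + 1) hi.1 hi.2
    rw [Nat.add_sub_cancel, e4, e2] at htj
    rw [e2]
    generalize n₀ * 2 ^ j = u at *
    have hu4 : 4 * u ≤ N := by omega
    have d1 := hEh u hu1 (by omega)
    have d2 := hEh (2 * u) (by omega) (by omega)
    have d4 := hEh (4 * u) (by omega) hu4
    set X : ℝ := if j + 1 = K - 1 then G else 0 with hX
    have hX0 : 0 ≤ X := by
      rw [hX]; split_ifs <;> linarith
    have hr := ratio_bound N u hu1 X hX0 (by
      rcases hcase with h | h
      · exact Or.inl h.1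
      · exact Or.inr ⟨h.1, by rw [hX, if_pos h.2]⟩)
    have hratio : Real.sqrt 2 * (E (4 * u) - E (2 * u)) / (E (2 * u) - E u) =
        Real.sqrt 2 * (hh (N - 2 * u) - hh (N - 4 * u)) / (hh (N - u) - hh (N - 2 * u)) := by
      rw [d1, d2, d4, ← mul_sub, ← mul_sub, mul_left_comm, mul_div_mul_left _ _ (by positivity)]
      rw [sub_sub_sub_cancel_left, sub_sub_sub_cancel_left]
    rw [hratio] at htj
    have htb : t (j + 1) ≤ 2 * (5 + X) / ell := by
      rw [htj]
      gcongr
    have hS0 : 0 ≤ hh N - hh (N - 2 * u) := by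
      have := hh_lower (N - 2 * u) (2 * u) N (by omega)
      rw [show N - 2 * u + 2 * u = N by omega] at this
      exact le_trans (by positivity) this
    have hS1 : hh N - hh (N - 2 * u) ≤ 1 := by
      have := hh_upper (N - 2 * u) (2 * u) (by omega)
      rw [show N - 2 * u + 2 * u = N by omega] at this
      refine this.trans ?_
      rw [div_le_one (by exact_mod_cast (by omega : 0 < N - 2 * u))]
      exact_mod_cast (by omega : 2 * u ≤ N - 2 * u)
    have hEC : E (2 * u) + C = (hh N - hh (N - 2 * u) + c) / lam := by
      rw [d2, hC]; ring
    rw [hEC]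
    calc _ ≤ (2 * (5 + X) / ell) * ((hh N - hh (N - 2 * u) + c) / lam) := by gcongr
      _ ≤ _ := by gcongr
  have hsum := Finset.sum_le_sum hterm
  have hsumeq : ∑ i ∈ Finset.Icc 1 (K - 1),
      (2 * (5 + if i = K - 1 then G else 0) / ell) * ((1 + c) / lam) =
      2 / ell * ((1 + c) / lam) * (5 * ((K - 1 : ℕ) : ℝ) + G) := by
    have h1 : ∑ i ∈ Finset.Icc 1 (K - 1), (5 + if i = K - 1 then G else 0) =
        5 * ((K - 1 : ℕ) : ℝ) + G := by
      rw [Finset.sum_add_distrib, Finset.sum_ite_eq']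
      rw [if_pos (by rw [Finset.mem_Icc]; omega)]
      simp
      ring
    rw [← h1, Finset.mul_sum]
    apply Finset.sum_congr rfl
    intro i _
    ring
  rw [hsumeq] at hsum
  have hKm : ((K - 1 : ℕ) : ℝ) ≤ K := by exact_mod_cast Nat.sub_le _ _
  have hP : 0 < (1 + c) / lam := by positivity
  have hb1 : 2 / ell * ((1 + c) / lam) * (5 * ((K - 1 : ℕ) : ℝ) + G) ≤
      2 / ell * ((1 + c) / lam) * (22 * G * L) := by
    apply mul_le_mul_of_nonneg_left _ (by positivity)
    nlinarith
  have hEN : E N + C ≤ (1 + c) / lam * (2 * G) := by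
    have := hEh N (by omega) le_rfl
    rw [Nat.sub_self, hh_zero] at this
    rw [this, hC]
    have h2 := hh_log N
    have h3 : hh N + c ≤ (1 + c) * (2 * G) := by nlinarith
    calc _ = (hh N + c) / lam := by ring
      _ ≤ ((1 + c) * (2 * G)) / lam := by gcongr
      _ = _ := by ring
  have hfac : 2 * L / ell + 1 ≤ 4 * L / ell := by
    rw [div_add_one hell0.ne']
    gcongr
    linarith
  have hfin : (E N + C) * (2 * L / ell + 1) ≤ (1 + c) / lam * (2 * G) * (4 * L / ell) := by
    have : 0 ≤ 2 * L / ell + 1 := by positivity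
    calc _ ≤ (1 + c) / lam * (2 * G) * (2 * L / ell + 1) := by gcongr
      _ ≤ _ := by gcongr
  rw [hT]
  calc _ ≤ 2 / ell * ((1 + c) / lam) * (22 * G * L) +
        (1 + c) / lam * (2 * G) * (4 * L / ell) := by linarith
    _ = _ := by
      field_simp
      ring
end

section
/- (Logarithmic speedup of SRPFL over FedRep.) There exists an absolute constant C₀ > 0 with the following property. Let λ > 0, c ≥ 0, a ∈ (0, 1/4], ĉ ∈ (1, √2), let n₀ ≥ 1 and K ≥ 2 be integers, and set N := 2^K·n₀. For 1 ≤ n ≤ N let E_n := (1/λ)·Σ_{i=N−n+1}^{N} 1/i, let C := c/λ, and for 1 ≤ i ≤ K−1 let t^i := 2·log(√2·(E_{n₀·2^{i+1}} − E_{n₀·2^i})/(E_{n₀·2^i} − E_{n₀·2^{i−1}}))/log(1/(1−a)). Define T_SRPFL := Σ_{i=1}^{K−1} t^i·(E_{n₀·2^i} + C) + (E_N + C)·(2·log(1/(ĉ−1))/log(1/(1−a)) + 1) and T_FedRep := (E_N + C)·(2·log(1/(ĉ−1)) + log N)/log(1/(1−a)). Then T_SRPFL/T_FedRep ≤ C₀·(c+1)·log(1/(ĉ−1))/(log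 N + log(1/(ĉ−1))). -/
open Real Finset

noncomputable def hS (N n : ℕ) : ℝ := ∑ i ∈ Finset.Ioc (N - n) N, (1 : ℝ) / i

lemma hS_sub (N p q : ℕ) (h : p ≤ q) (hq : q ≤ N) :
    hS N q - hS N p = ∑ i ∈ Finset.Ioc (N - q) (N - p), (1 : ℝ) / i := by
  unfold hS
  rw [← Finset.sum_Ioc_consecutive (fun i : ℕ => (1 : ℝ) / i)
    (show N - q ≤ N - p by omega) (show N - p ≤ N by omega)]
  ring

lemma Ioc_upper (p q : ℕ) (hp : 0 < p) (h : p ≤ q) :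
    ∑ i ∈ Finset.Ioc p q, (1 : ℝ) / i ≤ ((q : ℝ) - p) / p := by
  have h1 := Finset.sum_le_card_nsmul (Finset.Ioc p q) (fun i : ℕ => (1 : ℝ) / i) (1 / p) (by
    intro i hi
    have := (Finset.mem_Ioc.1 hi).1
    have hp' : (0 : ℝ) < p := by exact_mod_cast hp
    apply one_div_le_one_div_of_le hp'
    exact_mod_cast this.le)
  rw [Nat.card_Ioc, nsmul_eq_mul, Nat.cast_sub h] at h1
  calc _ ≤ _ := h1
    _ = _ := by ring

lemma Ioc_lower (p q : ℕ) (h : p ≤ q) :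
    ((q : ℝ) - p) / q ≤ ∑ i ∈ Finset.Ioc p q, (1 : ℝ) / i := by
  have h1 := Finset.card_nsmul_le_sum (Finset.Ioc p q) (fun i : ℕ => (1 : ℝ) / i) (1 / q) (by
    intro i hi
    have h2 := Finset.mem_Ioc.1 hi
    have hp' : (0 : ℝ) < i := by exact_mod_cast (by omega : 0 < i)
    apply one_div_le_one_div_of_le hp'
    exact_mod_cast h2.2)
  rw [Nat.card_Ioc, nsmul_eq_mul, Nat.cast_sub h] at h1
  calc _ = _ := by ring
    _ ≤ _ := h1

lemma hS_nonneg (N n : ℕ) : 0 ≤ hS N n := Finset.sum_nonneg (fun i _ => by positivity)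

lemma hS_le_one (N n : ℕ) (hn : 1 ≤ n) (h : 2 * n ≤ N) : hS N n ≤ 1 := by
  have h1 := Ioc_upper (N - n) N (by omega) (by omega)
  refine h1.trans ?_
  have h2 : (2 * n : ℝ) ≤ N := by exact_mod_cast h
  have h3 : (1 : ℝ) ≤ n := by exact_mod_cast hn
  rw [Nat.cast_sub (by omega), div_le_one (by linarith)]
  linarith

lemma ratio_int (N M : ℕ) (hM : 1 ≤ M) (h : 8 * M ≤ N) :
    (hS N (4 * M) - hS N (2 * M)) / (hS N (2 * M) - hS N M) ≤ 4 := by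
  rw [hS_sub _ _ _ (by omega) (by omega), hS_sub _ _ _ (by omega) (by omega)]
  have h1 := Ioc_upper (N - 4 * M) (N - 2 * M) (by omega) (by omega)
  have h2 := Ioc_lower (N - 2 * M) (N - M) (by omega)
  rw [Nat.cast_sub (by omega), Nat.cast_sub (by omega)] at h1
  rw [Nat.cast_sub (by omega), Nat.cast_sub (by omega)] at h2
  push_cast at h1 h2
  have h3 : (8 * M : ℝ) ≤ N := by exact_mod_cast h
  have h4 : (1 : ℝ) ≤ M := by exact_mod_cast hM
  have h5 : ((N : ℝ) - 2 * M - (N - 4 * M)) / (N - 4 * M) ≤ 4 * (M / N) := by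
    rw [div_le_iff₀ (by linarith)]
    have : (M : ℝ) / N * N = M := div_mul_cancel₀ _ (by linarith)
    have h6 : (M : ℝ) / N * (8 * M) ≤ M / N * N := by gcongr
    nlinarith
  have h6 : (M : ℝ) / N ≤ ((N : ℝ) - M - (N - 2 * M)) / (N - M) := by
    have : (N : ℝ) - M - (N - 2 * M) = M := by ring
    rw [this]
    apply div_le_div_of_nonneg_left <;> linarith
  have h7 : (0 : ℝ) < M / N := div_pos (by linarith) (by linarith)
  rw [div_le_iff₀ (by linarith)]
  linarith

lemma ratio_last (N M : ℕ) (hM : 1 ≤ M) (h : N = 4 * M) :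
    (hS N (4 * M) - hS N (2 * M)) / (hS N (2 * M) - hS N M) ≤ 3 * hS N N := by
  have h0 := hS_nonneg N (2 * M)
  have h1 := hS_nonneg N N
  rw [← h, hS_sub N M (2 * M) (by omega) (by omega)]
  have h2 := Ioc_lower (N - 2 * M) (N - M) (by omega)
  rw [Nat.cast_sub (by omega), Nat.cast_sub (by omega)] at h2
  have h4 : (1 : ℝ) ≤ M := by exact_mod_cast hM
  have h5 : (N : ℝ) = 4 * M := by exact_mod_cast h
  push_cast at h2
  have h6 : ((N : ℝ) - M - (N - 2 * M)) / (N - M) = 1 / 3 := by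
    rw [h5]; field_simp; ring
  rw [div_le_iff₀ (by linarith)]
  nlinarith

lemma log_le_aux (x y : ℝ) (hx : x ≤ y) (hy : 1 ≤ y) (h0 : 0 ≤ x): Real.log x ≤ y := by
  have := Real.log_le_self h0
  linarith

lemma hS_full (N : ℕ) : Real.log N ≤ hS N N := by
  have h := log_add_one_le_harmonic N
  rw [harmonic_eq_sum_Icc] at h
  have h2 : hS N N = ((∑ i ∈ Finset.Icc 1 N, (i : ℚ)⁻¹ : ℚ) : ℝ) := by
    unfold hS
    push_cast
    rw [Nat.sub_self]
    simp only [one_div]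
    rfl
  rw [h2]
  refine le_trans ?_ h
  rcases Nat.eq_zero_or_pos N with rfl | hN
  · simp
  · apply Real.log_le_log (by exact_mod_cast hN)
    push_cast; linarith

lemma hS_mono (N p q : ℕ) (h : p ≤ q) (hq : q ≤ N) : hS N p ≤ hS N q := by
  have := hS_sub N p q h hq
  have h2 : 0 ≤ ∑ i ∈ Finset.Ioc (N - q) (N - p), (1 : ℝ) / i :=
    Finset.sum_nonneg (fun i _ => by positivity)
  linarith

lemma sum_bound (c : ℝ) (hc : 0 ≤ c) (n₀ K N : ℕ) (hn : 1 ≤ n₀) (hK : 2 ≤ K)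
    (hN : N = 2 ^ K * n₀) :
    ∑ i ∈ Finset.Icc 1 (K - 1),
      2 * Real.log (Real.sqrt 2 * ((hS N (n₀ * 2 ^ (i + 1)) - hS N (n₀ * 2 ^ i)) /
                (hS N (n₀ * 2 ^ i) - hS N (n₀ * 2 ^ (i - 1))))) * (hS N (n₀ * 2 ^ i) + c)
      ≤ 33 * (1 + c) * hS N N := by
  have hs : Real.sqrt 2 ≤ 3 / 2 := by
    rw [Real.sqrt_le_left (by norm_num)]; norm_num
  have hs1 : 1 ≤ Real.sqrt 2 := by
    rw [Real.one_le_sqrt]; norm_num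
  have hKS : (K : ℝ) ≤ 2 * hS N N := by
    have h1 := hS_full N
    have h2 : (K : ℝ) * Real.log 2 ≤ Real.log N := by
      rw [← Real.log_pow]
      apply Real.log_le_log (by positivity)
      rw [hN]; push_cast
      have : (1 : ℝ) ≤ n₀ := by exact_mod_cast hn
      nlinarith [show (0 : ℝ) < 2 ^ K by positivity]
    have h3 := Real.log_two_gt_d9
    have h4 : (0 : ℝ) ≤ K := by positivity
    nlinarith
  have hK2 : (2 : ℝ) ≤ K := by exact_mod_cast hK
  have hS0 : 1 ≤ hS N N := by linarith
  have key : ∀ i ∈ Finset.Icc 1 (K - 1),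
      2 * Real.log (Real.sqrt 2 * ((hS N (n₀ * 2 ^ (i + 1)) - hS N (n₀ * 2 ^ i)) /
                (hS N (n₀ * 2 ^ i) - hS N (n₀ * 2 ^ (i - 1))))) * (hS N (n₀ * 2 ^ i) + c)
      ≤ 12 * (1 + c) + if i = K - 1 then 9 * hS N N * (1 + c) else 0 := by
    intro i hi
    rw [Finset.mem_Icc] at hi
    obtain ⟨j, rfl⟩ : ∃ j, i = j + 1 := ⟨i - 1, by omega⟩
    obtain ⟨k, rfl⟩ : ∃ k, K = j + 2 + k := ⟨K - (j + 2), by omega⟩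
    set M := n₀ * 2 ^ j with hM
    have hM1 : 1 ≤ M := Nat.mul_pos hn (by positivity)
    have e1 : n₀ * 2 ^ (j + 1 + 1) = 4 * M := by rw [hM]; ring
    have e2 : n₀ * 2 ^ (j + 1) = 2 * M := by rw [hM]; ring
    have e3 : n₀ * 2 ^ (j + 1 - 1) = M := by simp [hM]
    have eN : N = 4 * M * 2 ^ k := by rw [hN, hM]; ring
    have hk : 1 ≤ 2 ^ k := Nat.one_le_two_pow
    have hN4 : 4 * M ≤ N := by rw [eN]; exact Nat.le_mul_of_pos_right _ hk
    rw [e1, e2, e3]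
    have b1 := hS_le_one N (2 * M) (by omega) (by omega)
    have b0 := hS_nonneg N (2 * M)
    have hr0 : 0 ≤ (hS N (4 * M) - hS N (2 * M)) / (hS N (2 * M) - hS N M) := by
      apply div_nonneg
      · linarith [hS_mono N (2 * M) (4 * M) (by omega) hN4]
      · linarith [hS_mono N M (2 * M) (by omega) (by omega)]
    set r := (hS N (4 * M) - hS N (2 * M)) / (hS N (2 * M) - hS N M) with hr
    have hx0 : 0 ≤ Real.sqrt 2 * r := by positivity
    have hx : Real.sqrt 2 * r ≤ 3 / 2 * r := by gcongr
    rcases Nat.eq_zero_or_pos k with rfl | hkp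
    · rw [if_pos (by omega)]
      have h1 := ratio_last N M hM1 (by simpa using eN)
      rw [← hr] at h1
      have h2 := log_le_aux (Real.sqrt 2 * r) (9 / 2 * hS N N) (by linarith) (by linarith) hx0
      have h3 : 2 * Real.log (Real.sqrt 2 * r) * (hS N (2 * M) + c) ≤
          9 * hS N N * (hS N (2 * M) + c) := by
        apply mul_le_mul_of_nonneg_right _ (by linarith)
        linarith
      have h4 : 9 * hS N N * (hS N (2 * M) + c) ≤ 9 * hS N N * (1 + c) := by gcongr
      linarith
    · rw [if_neg (by omega)]
      have hk2 : 2 ≤ 2 ^ k := by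
        calc 2 = 2 ^ 1 := rfl
          _ ≤ 2 ^ k := Nat.pow_le_pow_right (by norm_num) hkp
      have h1 := ratio_int N M hM1 (by rw [eN]; nlinarith)
      rw [← hr] at h1
      have h2 := log_le_aux (Real.sqrt 2 * r) 6 (by linarith) (by linarith) hx0
      have h3 : 2 * Real.log (Real.sqrt 2 * r) * (hS N (2 * M) + c) ≤
          12 * (hS N (2 * M) + c) := by
        apply mul_le_mul_of_nonneg_right _ (by linarith)
        linarith
      linarith
  refine (Finset.sum_le_sum key).trans ?_
  rw [Finset.sum_add_distrib, Finset.sum_ite_eq', if_pos (by rw [Finset.mem_Icc]; omega),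
    Finset.sum_const, Nat.card_Icc, nsmul_eq_mul]
  have h5 : ((K - 1 + 1 - 1 : ℕ) : ℝ) ≤ K := by exact_mod_cast (by omega)
  have h6 : ((K - 1 + 1 - 1 : ℕ) : ℝ) * (12 * (1 + c)) ≤ (2 * hS N N) * (12 * (1 + c)) :=
    mul_le_mul_of_nonneg_right (by linarith) (by linarith)
  linarith

/-- logarithmic speedup of SRPFL over straggler-prone FedRep. -/
theorem srpfl_logarithmic_speedup :
    ∃ C₀ : ℝ, 0 < C₀ ∧
      ∀ (lam c a chat : ℝ) (n₀ K N : ℕ),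
        0 < lam → 0 ≤ c → 0 < a → a ≤ 1 / 4 → 1 < chat → chat < Real.sqrt 2 →
        1 ≤ n₀ → 2 ≤ K → N = 2 ^ K * n₀ →
        ∀ E : ℕ → ℝ,
          (∀ n, 1 ≤ n → n ≤ N →
            E n = (1 / lam) * ∑ i ∈ Finset.Icc (N - n + 1) N, (1 : ℝ) / i) →
        ∀ C : ℝ, C = c / lam →
        ∀ t : ℕ → ℝ,
          (∀ i, 1 ≤ i → i ≤ K - 1 →
            t i = 2 * Real.log (Real.sqrt 2 * (E (n₀ * 2 ^ (i + 1)) - E (n₀ * 2 ^ i)) /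
                (E (n₀ * 2 ^ i) - E (n₀ * 2 ^ (i - 1)))) / Real.log (1 / (1 - a))) →
        ∀ Tsrpfl Tfedrep : ℝ,
          Tsrpfl = (∑ i ∈ Finset.Icc 1 (K - 1), t i * (E (n₀ * 2 ^ i) + C)) +
              (E N + C) * (2 * Real.log (1 / (chat - 1)) / Real.log (1 / (1 - a)) + 1) →
          Tfedrep = (E N + C) * (2 * Real.log (1 / (chat - 1)) + Real.log N) /
              Real.log (1 / (1 - a)) →
        Tsrpfl / Tfedrep ≤ C₀ * (c + 1) * Real.log (1 / (chat - 1)) /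
              (Real.log N + Real.log (1 / (chat - 1))) := by
  refine ⟨69, by norm_num, ?_⟩
  intro lam c a chat n₀ K N hlam hc ha ha4 hch hch2 hn hK hN E hE C hC t ht Ts Tf hTs hTf
  have hN0 : 1 ≤ N := by rw [hN]; exact Nat.mul_pos (by positivity) hn
  have hE' : ∀ n, 1 ≤ n → n ≤ N → E n = (1 / lam) * hS N n := by
    intro n h1 h2
    rw [hE n h1 h2, hS]
    congr 2
    ext i
    simp only [Finset.mem_Icc, Finset.mem_Ioc]
    omega
  have hEi : ∀ i, i ≤ K → E (n₀ * 2 ^ i) = (1 / lam) * hS N (n₀ * 2 ^ i) := by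
    intro i hi
    apply hE'
    · exact Nat.mul_pos hn (by positivity)
    · rw [hN, mul_comm]
      exact Nat.mul_le_mul_right _ (Nat.pow_le_pow_right (by norm_num) hi)
  set L := Real.log (1 / (1 - a)) with hL
  have hLpos : 0 < L := by
    apply Real.log_pos
    rw [lt_div_iff₀ (by linarith)]; linarith
  have hL3 : L ≤ 1 / 3 := by
    have h1 := Real.log_le_sub_one_of_pos (show 0 < 1 / (1 - a) by
      apply div_pos one_pos; linarith)
    have h2 : 1 / (1 - a) ≤ 4 / 3 := by
      rw [div_le_div_iff₀ (by linarith) (by norm_num)]; linarith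
    linarith
  set l := Real.log (1 / (chat - 1)) with hl
  have hl2 : 1 / 2 ≤ l := by
    have h1 := Real.log_le_sub_one_of_pos (show 0 < chat - 1 by linarith)
    have hs : Real.sqrt 2 ≤ 3 / 2 := by
      rw [Real.sqrt_le_left (by norm_num)]; norm_num
    rw [hl, one_div (chat - 1), Real.log_inv]
    linarith
  have hlogN : 0 ≤ Real.log N := Real.log_natCast_nonneg N
  have hSN : 0 < hS N N := by
    have h1 : (2 : ℝ) ≤ N := by
      have : 2 ^ 1 ≤ 2 ^ K := Nat.pow_le_pow_right (by norm_num) (by omega)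
      have h3 : 2 ≤ N := by rw [hN]; nlinarith
      exact_mod_cast h3
    exact lt_of_lt_of_le (Real.log_pos (by linarith)) (hS_full N)
  have hsum := sum_bound c hc n₀ K N hn hK hN
  set Sg := ∑ i ∈ Finset.Icc 1 (K - 1),
      2 * Real.log (Real.sqrt 2 * ((hS N (n₀ * 2 ^ (i + 1)) - hS N (n₀ * 2 ^ i)) /
                (hS N (n₀ * 2 ^ i) - hS N (n₀ * 2 ^ (i - 1))))) * (hS N (n₀ * 2 ^ i) + c) with hSg
  have hsumeq : ∑ i ∈ Finset.Icc 1 (K - 1), t i * (E (n₀ * 2 ^ i) + C) = 1 / (lam * L) * Sg := by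
    rw [hSg, Finset.mul_sum]
    apply Finset.sum_congr rfl
    intro i hi
    rw [Finset.mem_Icc] at hi
    rw [ht i hi.1 hi.2, hEi i (by omega), hEi (i + 1) (by omega), hEi (i - 1) (by omega), hC,
      ← mul_sub, ← mul_sub, mul_div_assoc (Real.sqrt 2),
      mul_div_mul_left _ _ (by positivity : (1 / lam) ≠ 0)]
    field_simp
  have hA : Ts = 1 / (lam * L) * (Sg + (hS N N + c) * (2 * l + L)) := by
    rw [hTs, hsumeq, hE' N hN0 le_rfl, hC]
    field_simp
  have hB : Tf = 1 / (lam * L) * ((hS N N + c) * (2 * l + Real.log N)) := by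
    rw [hTf, hE' N hN0 le_rfl, hC]
    field_simp
  rw [hA, hB, mul_div_mul_left _ _ (by positivity)]
  have hSc : 0 < hS N N + c := by linarith
  have hnum : Sg + (hS N N + c) * (2 * l + L) ≤ 69 * (c + 1) * l * (hS N N + c) := by
    have h1 : 33 * (1 + c) * hS N N ≤ 33 * (1 + c) * (hS N N + c) := by gcongr; linarith
    have h2 : 33 * (1 + c) * (hS N N + c) * 1 ≤ 33 * (1 + c) * (hS N N + c) * (2 * l) := by
      gcongr; linarith
    have h3 : (hS N N + c) * (2 * l + L) ≤ (hS N N + c) * (3 * l) := by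
      gcongr; linarith
    have h4 : (hS N N + c) * (3 * l) * 1 ≤ (hS N N + c) * (3 * l) * (c + 1) := by
      gcongr; linarith
    linarith
  calc _ ≤ 69 * (c + 1) * l * (hS N N + c) / ((hS N N + c) * (2 * l + Real.log N)) := by
        gcongr
    _ = 69 * (c + 1) * l / (2 * l + Real.log N) := by
        field_simp
    _ ≤ _ := by
        apply div_le_div_of_nonneg_left
        · positivity
        · linarith
        · linarith
end
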